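/- Let Γ := ℝ³ with componentwise addition and the lexicographic order, with coordinate projections π_1, π_2, π_3 : Γ → ℝ, and let x̃ be a Hahn series in HahnSeries Γ ℝ whose support is finite. For real numbers μ, ν > 0, define x ∈ HahnSeries ℝ ℝ as the series whose coefficient at β ∈ ℝ equals Σ_{α ∈ supp(x̃), π_1(α) = β} (coefficient of x̃ at α)·μ^{π_2(α)}·ν^{π_3(α)}. Then there exists ν₀ > 0 such that for every ν with 0 < ν < ν₀ there exists μ₀ > 0 such that for every μ with 0 < μ < μ₀ the following hold: x = 0 if and only if x̃ = 0, and if x̃ ≠ 0 then the order of x equals π_1 applied to the order of x̃, and the leading coefficient of x has the same strict sign (positive, respectively negative) as the leading coefficient of x̃. -/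

import Mathlib

/-- The value group `Γ = ℝ³` with componentwise addition and the lexicographic order. -/
abbrev Γ₃ : Type := ℝ ×ₗ ℝ ×ₗ ℝ

/-- First coordinate projection `π₁ : Γ₃ → ℝ`. -/
def pi1 (g : Γ₃) : ℝ := (ofLex g).1
/-- Second coordinate projection `π₂ : Γ₃ → ℝ`. -/
def pi2 (g : Γ₃) : ℝ := (ofLex (ofLex g).2).1
/-- Third coordinate projection `π₃ : Γ₃ → ℝ`. -/
def pi3 (g : Γ₃) : ℝ := (ofLex (ofLex g).2).2

lemma aux_tendsto {ι : Type*} (s : Finset ι) (a e : ι → ℝ) (he : ∀ i ∈ s, 0 ≤ e i) :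
    Filter.Tendsto (fun t : ℝ => ∑ i ∈ s, a i * t ^ (e i)) (nhdsWithin 0 (Set.Ioi 0))
      (nhds (∑ i ∈ s, if e i = 0 then a i else 0)) := by
  refine tendsto_finsetSum _ fun i hi => ?_
  by_cases h : e i = 0
  · simp [h]
  · have hc : ContinuousAt (fun t : ℝ => t ^ (e i)) 0 :=
      Real.continuousAt_rpow_const 0 (e i) (Or.inr (he i hi))
    have h1 := (hc.tendsto.mono_left (nhdsWithin_le_nhds (s := Set.Ioi 0))).const_mul (a i)
    simpa [h, Real.zero_rpow h] using h1

lemma aux_pos {ι : Type*} (s : Finset ι) (a e : ι → ℝ) (he : ∀ i ∈ s, 0 ≤ e i) (c : ℝ)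
    (hpos : 0 < c * ∑ i ∈ s, if e i = 0 then a i else 0) :
    ∃ t₀ : ℝ, 0 < t₀ ∧ ∀ t : ℝ, 0 < t → t < t₀ → 0 < c * ∑ i ∈ s, a i * t ^ (e i) := by
  have h := ((aux_tendsto s a e he).const_mul c).eventually (lt_mem_nhds hpos)
  obtain ⟨u, hu, hs⟩ := mem_nhdsGT_iff_exists_Ioo_subset.1 h
  exact ⟨u, hu, fun t h1 h2 => hs ⟨h1, h2⟩⟩

lemma aux_le {a b : Γ₃} (h : a ≤ b) : pi1 a ≤ pi1 b ∧ (pi1 b = pi1 a → pi2 a ≤ pi2 b) ∧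
    (pi1 b = pi1 a → pi2 b = pi2 a → pi3 a ≤ pi3 b) := by
  rw [Prod.Lex.le_iff, Prod.Lex.le_iff] at h
  simp only [pi1, pi2, pi3]
  grind

lemma aux_ext {a b : Γ₃} (h1 : pi1 a = pi1 b) (h2 : pi2 a = pi2 b) (h3 : pi3 a = pi3 b) :
    a = b := by
  apply ofLex.injective
  refine Prod.ext h1 ?_
  apply ofLex.injective
  exact Prod.ext h2 h3

/-- let `xt` be a Hahn series over `Γ₃` with finite support, and for
`μ, ν > 0` let `x` be the Hahn series over `ℝ` whose coefficient at `β` is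
`∑_{α ∈ supp xt, π₁ α = β} (xt.coeff α)·μ^{π₂ α}·ν^{π₃ α}` (real powers).  Then for all
sufficiently small `ν > 0` and then all sufficiently small `μ > 0` (depending on `ν`):
`x = 0` iff `xt = 0`, and if `xt ≠ 0` then the order of `x` is `π₁` of the order of `xt`
and the leading coefficients of `x` and `xt` have the same strict sign. -/
theorem hahn_projection_order_sign (xt : HahnSeries Γ₃ ℝ)
    (hfin : xt.support.Finite) :
    ∃ ν₀ : ℝ, 0 < ν₀ ∧ ∀ ν : ℝ, 0 < ν → ν < ν₀ →
      ∃ μ₀ : ℝ, 0 < μ₀ ∧ ∀ μ : ℝ, 0 < μ → μ < μ₀ →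
        ∀ x : HahnSeries ℝ ℝ,
          (∀ β : ℝ, x.coeff β =
            ∑ α ∈ hfin.toFinset,
              if pi1 α = β then xt.coeff α * μ ^ (pi2 α) * ν ^ (pi3 α) else 0) →
          ((x = 0 ↔ xt = 0) ∧
            (xt ≠ 0 →
              x.order = pi1 xt.order ∧
              (0 < xt.coeff xt.order ↔ 0 < x.coeff x.order) ∧
              (xt.coeff xt.order < 0 ↔ x.coeff x.order < 0))) := by
  classical
  by_cases h0 : xt = 0
  · refine ⟨1, one_pos, fun ν _ _ => ⟨1, one_pos, fun μ _ _ x hx => ⟨?_, fun h => absurd h0 h⟩⟩⟩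
    refine ⟨fun _ => h0, fun _ => ?_⟩
    ext β
    rw [hx β]
    simp [h0]
  have hc0 : xt.coeff xt.order ≠ 0 := HahnSeries.coeff_order_eq_zero.not.2 h0
  have hmem : xt.order ∈ hfin.toFinset := by simpa using hc0
  have hle : ∀ α ∈ hfin.toFinset, xt.order ≤ α := fun α hα =>
    HahnSeries.order_le_of_coeff_ne_zero (by simpa using hα)
  set o := xt.order with ho
  set T := hfin.toFinset.filter (fun α => pi1 α = pi1 o) with hT
  set U := T.filter (fun α => pi2 α = pi2 o) with hU
  have hlim : (∑ α ∈ U, if pi3 α - pi3 o = 0 then xt.coeff α else 0) = xt.coeff o := by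
    rw [Finset.sum_eq_single o]
    · simp
    · intro b hb hne
      rw [if_neg]
      intro h3
      simp only [hU, hT, Finset.mem_filter] at hb
      exact hne (aux_ext hb.1.2 hb.2 (sub_eq_zero.1 h3))
    · intro h
      simp [hU, hT] at h
      exact absurd h hc0
  obtain ⟨ν₀, hν₀, H⟩ := aux_pos U (fun α => xt.coeff α) (fun α => pi3 α - pi3 o) (by
    intro i hi
    simp only [hU, hT, Finset.mem_filter] at hi
    exact sub_nonneg.2 ((aux_le (hle i hi.1.1)).2.2 hi.1.2 hi.2)) (xt.coeff o)
    (by rw [hlim]; exact mul_self_pos.2 hc0)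
  refine ⟨ν₀, hν₀, fun ν hν hνlt => ?_⟩
  have H1 := H ν hν hνlt
  obtain ⟨μ₀, hμ₀, K⟩ := aux_pos T (fun α => xt.coeff α * ν ^ (pi3 α - pi3 o))
    (fun α => pi2 α - pi2 o) (by
    intro i hi
    simp only [hT, Finset.mem_filter] at hi
    exact sub_nonneg.2 ((aux_le (hle i hi.1)).2.1 hi.2)) (xt.coeff o) (by
      simpa only [hU, Finset.sum_filter, sub_eq_zero] using H1)
  refine ⟨μ₀, hμ₀, fun μ hμ hμlt x hx => ?_⟩
  have K1 := K μ hμ hμlt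
  have hxo : x.coeff (pi1 o) = (μ ^ pi2 o * ν ^ pi3 o) *
      ∑ α ∈ T, xt.coeff α * ν ^ (pi3 α - pi3 o) * μ ^ (pi2 α - pi2 o) := by
    rw [hx, ← Finset.sum_filter, Finset.mul_sum]
    refine Finset.sum_congr rfl fun α _ => ?_
    rw [Real.rpow_sub hν, Real.rpow_sub hμ]
    have := (Real.rpow_pos_of_pos hν (pi3 o)).ne'
    have := (Real.rpow_pos_of_pos hμ (pi2 o)).ne'
    field_simp
  have hpos : 0 < xt.coeff o * x.coeff (pi1 o) := by
    rw [hxo, mul_left_comm]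
    have := Real.rpow_pos_of_pos hν (pi3 o)
    have := Real.rpow_pos_of_pos hμ (pi2 o)
    positivity
  have hne : x.coeff (pi1 o) ≠ 0 := fun h => by simp [h] at hpos
  have hx0 : x ≠ 0 := fun h => hne (by simp [h])
  have hord : x.order = pi1 o := by
    refine le_antisymm (HahnSeries.order_le_of_coeff_ne_zero hne) ?_
    by_contra! hlt
    refine HahnSeries.coeff_order_eq_zero.not.2 hx0 ?_
    rw [hx]
    refine Finset.sum_eq_zero fun α hα => if_neg fun h => ?_
    have := (aux_le (hle α hα)).1
    linarith
  refine ⟨⟨fun h => absurd h hx0, fun h => absurd h h0⟩, fun _ => ⟨hord, ?_, ?_⟩⟩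
  · rw [hord]
    constructor <;> intro h <;> nlinarith
  · rw [hord]
    constructor <;> intro h <;> nlinarith
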